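/- Let T ⊂ R^2 be a nondegenerate triangle, f a convex C^2 function on T, and e an edge of T with endpoints z₀, z₁. Then the L¹ interpolation error decrease D_T(e,f) satisfies D_T(e,f) = (|T|/6)·∫₀¹ ⟨d²f(z_t)·(z₁−z₀), z₁−z₀⟩·min{t, 1−t} dt, where z_t = (1−t)z₀ + t z₁. -/

import Mathlib

open MeasureTheory

/-- The 2D cross product / determinant of two vectors of `ℝ × ℝ`. -/
noncomputable def det2 (u v : ℝ × ℝ) : ℝ := u.1 * v.2 - u.2 * v.1

/-- The area of the triangle with vertices `p0, p1, p2`. -/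
noncomputable def triArea (p0 p1 p2 : ℝ × ℝ) : ℝ := |det2 (p1 - p0) (p2 - p0)| / 2

/-- The (closed) triangle with vertices `p0, p1, p2`. -/
def tri (p0 p1 p2 : ℝ × ℝ) : Set (ℝ × ℝ) := convexHull ℝ {p0, p1, p2}

/-- The affine interpolation of `f` at the vertices `p0, p1, p2`, written with
barycentric coordinates; for affinely independent vertices it is the unique
affine function agreeing with `f` at the three vertices. -/
noncomputable def interp (p0 p1 p2 : ℝ × ℝ) (f : ℝ × ℝ → ℝ) (x : ℝ × ℝ) : ℝ :=
  (det2 (p1 - x) (p2 - x) * f p0 + det2 (p2 - x) (p0 - x) * f p1 +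
    det2 (p0 - x) (p1 - x) * f p2) / det2 (p1 - p0) (p2 - p0)

/-- The `L¹` interpolation error `‖f − I_T f‖_{L¹(T)}` on the triangle `T` with
vertices `p0, p1, p2`. -/
noncomputable def interpErr (p0 p1 p2 : ℝ × ℝ) (f : ℝ × ℝ → ℝ) : ℝ :=
  ∫ x in tri p0 p1 p2, |f x - interp p0 p1 p2 f x|

/-- The decrease `D_T(e,f)` of the `L¹` interpolation error when the triangle
with vertices `z0, z1, z2` is bisected from the midpoint of the edge `e = [z0,z1]`
to the opposite vertex `z2`. -/
noncomputable def Ddec (z0 z1 z2 : ℝ × ℝ) (f : ℝ × ℝ → ℝ) : ℝ :=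
  interpErr z0 z1 z2 f - interpErr z0 (midpoint ℝ z0 z1) z2 f -
    interpErr (midpoint ℝ z0 z1) z1 z2 f

/-!
On a triangle `T` a convex function lies below its interpolant, so the error is
`∫_T I_T f - ∫_T f`, and the first term is `|T|` times the mean of the vertex values. Cutting `T`
from a point of an edge to the opposite vertex, the integrals of `f` cancel in the error decrease;
for a bisection only `|T| / 6 * (f z₀ + f z₁ - 2 * f m)` is left, with `m` the midpoint of the
edge. This second difference has Peano kernel `min t (1 - t)` against the second derivative of `f`
along the edge.
-/

section PeanoKernel

variable {E F : Type*} [NormedAddCommGroup E] [NormedSpace ℝ E] [NormedAddCommGroup F]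
  [NormedSpace ℝ F]

theorem integral_sub_smul_second_deriv [CompleteSpace F] {g g' g'' : ℝ → F} {a b : ℝ} (c : ℝ)
    (hg : ∀ t ∈ Set.uIcc a b, HasDerivAt g (g' t) t)
    (hg' : ∀ t ∈ Set.uIcc a b, HasDerivAt g' (g'' t) t)
    (hint : IntervalIntegrable g'' volume a b) :
    ∫ t in a..b, (t - c) • g'' t = (b - c) • g' b - (a - c) • g' a - (g b - g a) := by
  have hg'_int : IntervalIntegrable g' volume a b :=
    ContinuousOn.intervalIntegrable fun t ht => (hg' t ht).continuousAt.continuousWithinAt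
  rw [intervalIntegral.integral_smul_deriv_eq_deriv_smul
    (fun t _ => (hasDerivAt_id' t).sub_const c) hg' intervalIntegrable_const hint]
  simp only [one_smul, intervalIntegral.integral_eq_sub_of_hasDerivAt hg hg'_int]

theorem midpoint_mem_Icc {a b : ℝ} (hab : a ≤ b) : midpoint ℝ a b ∈ Set.Icc a b :=
  segment_eq_Icc hab ▸ midpoint_mem_segment a b

theorem midpoint_eq_add_div_two (a b : ℝ) : midpoint ℝ a b = (a + b) / 2 := by
  rw [midpoint_eq_smul_add, smul_eq_mul, invOf_eq_inv, inv_mul_eq_div]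

theorem integral_min_smul {h : ℝ → F} {a b : ℝ} (hab : a ≤ b)
    (hint : IntervalIntegrable h volume a b) :
    ∫ t in a..b, min (t - a) (b - t) • h t =
      (∫ t in a..midpoint ℝ a b, (t - a) • h t) - ∫ t in midpoint ℝ a b..b, (t - b) • h t := by
  have hm := midpoint_eq_add_div_two a b
  obtain ⟨ham, hmb⟩ := midpoint_mem_Icc hab
  set m := midpoint ℝ a b
  have hm_mem : m ∈ Set.uIcc a b := Set.uIcc_of_le hab ▸ ⟨ham, hmb⟩
  have hmin_int : IntervalIntegrable (fun t => min (t - a) (b - t) • h t) volume a b :=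
    hint.continuousOn_smul (by fun_prop)
  have hleft : ∫ t in a..m, min (t - a) (b - t) • h t = ∫ t in a..m, (t - a) • h t := by
    refine intervalIntegral.integral_congr fun t ht => ?_
    rw [Set.uIcc_of_le ham] at ht
    simp only [min_eq_left (show t - a ≤ b - t by linarith [ht.2])]
  have hright : ∫ t in m..b, min (t - a) (b - t) • h t = -∫ t in m..b, (t - b) • h t := by
    rw [← intervalIntegral.integral_neg]
    refine intervalIntegral.integral_congr fun t ht => ?_
    rw [Set.uIcc_of_le hmb] at ht
    simp only [min_eq_right (show b - t ≤ t - a by linarith [ht.1]), ← neg_smul, neg_sub]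
  rw [← intervalIntegral.integral_add_adjacent_intervals
    (hmin_int.mono_set (Set.uIcc_subset_uIcc_left hm_mem))
    (hmin_int.mono_set (Set.uIcc_subset_uIcc_right hm_mem)), hleft, hright, sub_eq_add_neg]

theorem integral_min_smul_second_deriv [CompleteSpace F] {g g' g'' : ℝ → F} {a b : ℝ}
    (hab : a ≤ b) (hg : ∀ t ∈ Set.Icc a b, HasDerivAt g (g' t) t)
    (hg' : ∀ t ∈ Set.Icc a b, HasDerivAt g' (g'' t) t)
    (hint : IntervalIntegrable g'' volume a b) :
    ∫ t in a..b, min (t - a) (b - t) • g'' t = g a + g b - (2 : ℝ) • g (midpoint ℝ a b) := by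
  rw [← Set.uIcc_of_le hab] at hg hg'
  have hm_mem : midpoint ℝ a b ∈ Set.uIcc a b := Set.uIcc_of_le hab ▸ midpoint_mem_Icc hab
  have hleft := Set.uIcc_subset_uIcc_left hm_mem
  have hright := Set.uIcc_subset_uIcc_right hm_mem
  rw [integral_min_smul hab hint,
    integral_sub_smul_second_deriv a (fun t ht => hg t (hleft ht)) (fun t ht => hg' t (hleft ht))
      (hint.mono_set hleft),
    integral_sub_smul_second_deriv b (fun t ht => hg t (hright ht))
      (fun t ht => hg' t (hright ht)) (hint.mono_set hright), midpoint_eq_add_div_two]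
  module

theorem hasDerivAt_one_sub_smul_add_smul (x y : E) (t : ℝ) :
    HasDerivAt (fun t : ℝ => (1 - t) • x + t • y) (y - x) t := by
  convert! (((hasDerivAt_id' t).const_sub 1).smul_const x).add
    ((hasDerivAt_id' t).smul_const y) using 1
  module

theorem hasDerivAt_comp_one_sub_smul_add_smul {f : E → F} {x y : E} {t : ℝ}
    (hf : DifferentiableAt ℝ f ((1 - t) • x + t • y)) :
    HasDerivAt (fun t : ℝ => f ((1 - t) • x + t • y))
      (fderiv ℝ f ((1 - t) • x + t • y) (y - x)) t :=
  hf.hasFDerivAt.comp_hasDerivAt t (hasDerivAt_one_sub_smul_add_smul x y t)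

theorem integral_min_smul_fderiv_fderiv [CompleteSpace F] {f : E → F} {x y : E}
    (hf : ∀ z ∈ segment ℝ x y, ContDiffAt ℝ 2 f z) :
    ∫ t in (0 : ℝ)..1, min t (1 - t) •
        fderiv ℝ (fderiv ℝ f) ((1 - t) • x + t • y) (y - x) (y - x) =
      f x + f y - (2 : ℝ) • f (midpoint ℝ x y) := by
  set γ : ℝ → E := fun t => (1 - t) • x + t • y
  have hfγ {t : ℝ} (ht : t ∈ Set.Icc (0 : ℝ) 1) : ContDiffAt ℝ 2 f (γ t) :=
    hf _ ⟨1 - t, t, sub_nonneg.2 ht.2, ht.1, sub_add_cancel 1 t, rfl⟩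
  have hf' {t : ℝ} (ht : t ∈ Set.Icc (0 : ℝ) 1) : ContDiffAt ℝ 1 (fderiv ℝ f) (γ t) :=
    (hfγ ht).fderiv_right (by norm_num)
  have hg : ∀ t ∈ Set.Icc (0 : ℝ) 1, HasDerivAt (fun t => f (γ t)) (fderiv ℝ f (γ t) (y - x)) t :=
    fun t ht => hasDerivAt_comp_one_sub_smul_add_smul ((hfγ ht).differentiableAt (by norm_num))
  have hg' : ∀ t ∈ Set.Icc (0 : ℝ) 1, HasDerivAt (fun t => fderiv ℝ f (γ t) (y - x))
      (fderiv ℝ (fderiv ℝ f) (γ t) (y - x) (y - x)) t := fun t ht => by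
    have := hasDerivAt_comp_one_sub_smul_add_smul ((hf' ht).differentiableAt (by norm_num))
    simpa using this.clm_apply (hasDerivAt_const t (y - x))
  have hg''_cont : ContinuousOn
      (fun t => fderiv ℝ (fderiv ℝ f) (γ t) (y - x) (y - x)) (Set.uIcc 0 1) := fun t ht => by
    rw [Set.uIcc_of_le zero_le_one] at ht
    have hcont : ContinuousAt (fun t => fderiv ℝ (fderiv ℝ f) (γ t)) t :=
      ((hf' ht).fderiv_right (m := 0) (by norm_num)).continuousAt.comp
        (hasDerivAt_one_sub_smul_add_smul x y t).continuousAt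
    exact ((hcont.clm_apply continuousAt_const).clm_apply continuousAt_const).continuousWithinAt
  have hmid : γ (midpoint ℝ (0 : ℝ) 1) = midpoint ℝ x y := by
    rw [midpoint_eq_add_div_two, midpoint_eq_smul_add, invOf_eq_inv]
    module
  simpa [γ, hmid] using
    integral_min_smul_second_deriv zero_le_one hg hg' hg''_cont.intervalIntegrable

end PeanoKernel

section Measure

variable {E : Type*} [NormedAddCommGroup E] [NormedSpace ℝ E] [FiniteDimensional ℝ E]
  [MeasurableSpace E] [BorelSpace E] (μ : Measure E) [μ.IsAddHaarMeasure]

theorem aestronglyMeasurable_restrict_of_convexOn {s : Set E} {f : E → ℝ} (hf : ConvexOn ℝ s f) :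
    AEStronglyMeasurable f (μ.restrict s) := by
  rw [← Measure.restrict_congr_set
    (interior_ae_eq_of_null_frontier (hf.1.addHaar_frontier μ))]
  exact hf.continuousOn_interior.aestronglyMeasurable isOpen_interior.measurableSet

theorem addHaar_setOf_linearMap_eq {l : E →ₗ[ℝ] ℝ} (hl : l ≠ 0) (c : ℝ) :
    μ {x | l x = c} = 0 := by
  obtain ⟨x₀, rfl⟩ := LinearMap.surjective hl c
  have hne : AffineSubspace.mk' x₀ (LinearMap.ker l) ≠ ⊤ := fun h => hl <| by
    rw [← LinearMap.ker_eq_top, ← AffineSubspace.direction_mk' x₀ (LinearMap.ker l), h,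
      AffineSubspace.direction_top]
  convert! Measure.addHaar_affineSubspace μ _ hne using 2
  ext x
  simp [AffineSubspace.mem_mk', sub_eq_zero]

end Measure

section Barycentric

/-- The point whose barycentric coordinates with respect to `p0, p1, p2` are
`1 - q.1 - q.2, q.1, q.2`. -/
def baryPoint (p0 p1 p2 q : ℝ × ℝ) : ℝ × ℝ := (1 - q.1 - q.2) • p0 + q.1 • p1 + q.2 • p2

/-- The barycentric coordinates of `baryPoint p0 p1 p2 q`, as a weight vector for the sum-indexed
statements on convex combinations. -/
def baryWeights (q : ℝ × ℝ) : Fin 3 → ℝ := ![1 - q.1 - q.2, q.1, q.2]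

/-- The reference triangle with vertices `(0, 0)`, `(1, 0)`, `(0, 1)`, on which `baryPoint`
parametrizes an arbitrary triangle. -/
def refTri : Set (ℝ × ℝ) := {q | 0 ≤ q.1 ∧ 0 ≤ q.2 ∧ q.1 + q.2 ≤ 1}

theorem baryWeights_nonneg {q : ℝ × ℝ} (hq : q ∈ refTri) (i : Fin 3) : 0 ≤ baryWeights q i := by
  obtain ⟨h1, h2, h3⟩ := hq
  fin_cases i
  exacts [show 0 ≤ 1 - q.1 - q.2 by linarith, h1, h2]

theorem sum_baryWeights (q : ℝ × ℝ) : ∑ i, baryWeights q i = 1 := by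
  simp only [baryWeights, Fin.sum_univ_three, Matrix.cons_val]
  ring

theorem sum_baryWeights_smul (p0 p1 p2 q : ℝ × ℝ) :
    ∑ i, baryWeights q i • ![p0, p1, p2] i = baryPoint p0 p1 p2 q := by
  simp only [baryWeights, baryPoint, Fin.sum_univ_three, Matrix.cons_val]

theorem tri_subset {p0 p1 p2 : ℝ × ℝ} {s : Set (ℝ × ℝ)} (hs : Convex ℝ s) (h0 : p0 ∈ s)
    (h1 : p1 ∈ s) (h2 : p2 ∈ s) : tri p0 p1 p2 ⊆ s :=
  convexHull_min (Set.insert_subset h0 (Set.pair_subset h1 h2)) hs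

theorem tri_eq_image_baryPoint (p0 p1 p2 : ℝ × ℝ) :
    tri p0 p1 p2 = baryPoint p0 p1 p2 '' refTri := by
  refine Set.Subset.antisymm (tri_subset ?_ ⟨(0, 0), by simp [refTri], by simp [baryPoint]⟩
    ⟨(1, 0), by simp [refTri], by simp [baryPoint]⟩
    ⟨(0, 1), by simp [refTri], by simp [baryPoint]⟩) ?_
  · rintro _ ⟨q, ⟨h1, h2, h3⟩, rfl⟩ _ ⟨r, ⟨k1, k2, k3⟩, rfl⟩ s t hs ht hst
    refine ⟨s • q + t • r, ⟨?_, ?_, ?_⟩, ?_⟩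
    · simp only [Prod.fst_add, Prod.smul_fst, smul_eq_mul]; positivity
    · simp only [Prod.snd_add, Prod.smul_snd, smul_eq_mul]; positivity
    · simp only [Prod.fst_add, Prod.smul_fst, Prod.snd_add, Prod.smul_snd, smul_eq_mul]
      nlinarith
    · obtain rfl : s = 1 - t := by linarith
      simp only [baryPoint, Prod.fst_add, Prod.smul_fst, Prod.snd_add, Prod.smul_snd, smul_eq_mul]
      module
  · rintro _ ⟨q, hq, rfl⟩
    exact mem_convexHull_of_exists_fintype (baryWeights q) ![p0, p1, p2] (baryWeights_nonneg hq)
      (sum_baryWeights q) (fun i => by fin_cases i <;> simp) (sum_baryWeights_smul p0 p1 p2 q)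

theorem baryPoint_mem_tri (p0 p1 p2 : ℝ × ℝ) {q : ℝ × ℝ} (hq : q ∈ refTri) :
    baryPoint p0 p1 p2 q ∈ tri p0 p1 p2 :=
  tri_eq_image_baryPoint p0 p1 p2 ▸ Set.mem_image_of_mem _ hq

theorem isCompact_tri (p0 p1 p2 : ℝ × ℝ) : IsCompact (tri p0 p1 p2) :=
  (Set.toFinite {p0, p1, p2}).isCompact_convexHull ℝ

theorem vertices_subset_tri (p0 p1 p2 : ℝ × ℝ) : {p0, p1, p2} ⊆ tri p0 p1 p2 :=
  subset_convexHull ℝ _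

theorem apply_baryPoint_le_of_convexOn {p0 p1 p2 : ℝ × ℝ} {f : ℝ × ℝ → ℝ}
    (hf : ConvexOn ℝ (tri p0 p1 p2) f) {q : ℝ × ℝ} (hq : q ∈ refTri) :
    f (baryPoint p0 p1 p2 q) ≤ (1 - q.1 - q.2) * f p0 + q.1 * f p1 + q.2 * f p2 := by
  have := hf.map_sum_le (t := Finset.univ) (p := ![p0, p1, p2])
    (fun i _ => baryWeights_nonneg hq i) (sum_baryWeights q)
    (fun i _ => vertices_subset_tri p0 p1 p2 (by fin_cases i <;> simp))
  rw [sum_baryWeights_smul] at this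
  simpa only [baryWeights, Fin.sum_univ_three, Matrix.cons_val, smul_eq_mul] using this

end Barycentric

section Integrability

variable {p0 p1 p2 : ℝ × ℝ} {f : ℝ × ℝ → ℝ}

theorem bddAbove_image_tri_of_convexOn (hf : ConvexOn ℝ (tri p0 p1 p2) f) :
    BddAbove (f '' tri p0 p1 p2) :=
  hf.bddAbove_convexHull (vertices_subset_tri p0 p1 p2) ((Set.toFinite _).image f).bddAbove

theorem bddBelow_image_tri_of_convexOn (hf : ConvexOn ℝ (tri p0 p1 p2) f) :
    BddBelow (f '' tri p0 p1 p2) := by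
  obtain ⟨M, hM⟩ := bddAbove_image_tri_of_convexOn hf
  refine ⟨3 * f (baryPoint p0 p1 p2 (1 / 3, 1 / 3)) - 2 * M, ?_⟩
  rintro _ ⟨x, hx, rfl⟩
  obtain ⟨q, ⟨h1, h2, h3⟩, rfl⟩ := tri_eq_image_baryPoint p0 p1 p2 ▸ hx
  -- The centroid is `x / 3 + 2 * y / 3`, where `y` is the image of `x` under the homothety of
  -- ratio `-1 / 2` about the centroid, which maps the triangle into itself.
  have hy : ((1 - q.1) / 2, (1 - q.2) / 2) ∈ refTri :=
    ⟨by simp only; linarith, by simp only; linarith, by simp only; linarith⟩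
  have hcentroid : baryPoint p0 p1 p2 (1 / 3, 1 / 3) = (1 / 3 : ℝ) • baryPoint p0 p1 p2 q +
      (2 / 3 : ℝ) • baryPoint p0 p1 p2 ((1 - q.1) / 2, (1 - q.2) / 2) := by
    simp only [baryPoint]
    module
  have hconv := hf.2 hx (baryPoint_mem_tri p0 p1 p2 hy) (show (0 : ℝ) ≤ 1 / 3 by norm_num)
    (show (0 : ℝ) ≤ 2 / 3 by norm_num) (by norm_num)
  have hyM := hM (Set.mem_image_of_mem f (baryPoint_mem_tri p0 p1 p2 hy))
  rw [← hcentroid, smul_eq_mul, smul_eq_mul] at hconv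
  linarith

theorem integrableOn_tri_of_convexOn (hf : ConvexOn ℝ (tri p0 p1 p2) f) :
    IntegrableOn f (tri p0 p1 p2) := by
  obtain ⟨C, hC⟩ := ((bddBelow_image_tri_of_convexOn hf).isBounded
    (bddAbove_image_tri_of_convexOn hf)).exists_norm_le
  have hK := isCompact_tri p0 p1 p2
  refine .of_bound hK.measure_lt_top (aestronglyMeasurable_restrict_of_convexOn volume hf) C ?_
  exact ae_restrict_of_forall_mem hK.measurableSet fun x hx => hC _ (Set.mem_image_of_mem f hx)

end Integrability

section ReferenceTriangle

variable {E : Type*} [NormedAddCommGroup E] [NormedSpace ℝ E]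

theorem isCompact_refTri : IsCompact refTri := by
  have hclosed : IsClosed refTri :=
    (isClosed_le continuous_const continuous_fst).inter
      ((isClosed_le continuous_const continuous_snd).inter
        (isClosed_le (continuous_fst.add continuous_snd) continuous_const))
  refine (isCompact_Icc (a := ((0 : ℝ), (0 : ℝ))) (b := (1, 1))).of_isClosed_subset hclosed ?_
  rintro ⟨x, y⟩ ⟨hx, hy, hxy⟩
  simp only at hx hy hxy
  exact ⟨⟨hx, hy⟩, by simp only; linarith, by simp only; linarith⟩

theorem setIntegral_refTri {g : ℝ × ℝ → E} (hg : IntegrableOn g refTri) :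
    ∫ q in refTri, g q = ∫ x in (0 : ℝ)..1, ∫ y in (0 : ℝ)..(1 - x), g (x, y) := by
  have hmeas : MeasurableSet refTri := isCompact_refTri.measurableSet
  have hslice (x : ℝ) : ∫ y, refTri.indicator g (x, y) =
      (Set.Icc (0 : ℝ) 1).indicator (fun x => ∫ y in (0 : ℝ)..(1 - x), g (x, y)) x := by
    by_cases hx : x ∈ Set.Icc (0 : ℝ) 1
    · have hmem (y : ℝ) : (x, y) ∈ refTri ↔ y ∈ Set.Icc (0 : ℝ) (1 - x) := by
        simp only [refTri, Set.mem_ofPred_eq, Set.mem_Icc, hx.1, true_and, le_sub_iff_add_le']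
      rw [Set.indicator_of_mem hx, intervalIntegral.integral_of_le (sub_nonneg.2 hx.2),
        ← integral_Icc_eq_integral_Ioc, ← integral_indicator measurableSet_Icc]
      simp only [Set.indicator, hmem]
    · have hempty (y : ℝ) : (x, y) ∉ refTri := fun ⟨h1, h2, h3⟩ =>
        hx ⟨h1, by simp only at h2 h3; linarith⟩
      simp [Set.indicator_of_notMem hx, hempty]
  rw [← integral_indicator hmeas, Measure.volume_eq_prod,
    integral_prod _ ((integrable_indicator_iff hmeas).2 hg)]
  simp only [hslice]
  rw [integral_indicator measurableSet_Icc, integral_Icc_eq_integral_Ioc,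
    ← intervalIntegral.integral_of_le zero_le_one]

theorem setIntegral_refTri_bary (α β γ : ℝ) :
    ∫ q in refTri, ((1 - q.1 - q.2) * α + q.1 * β + q.2 * γ) = (α + β + γ) / 6 := by
  have hslice (x : ℝ) : ∫ y in (0 : ℝ)..(1 - x), ((1 - x - y) * α + x * β + y * γ) =
      (1 - x) ^ 2 * ((α + γ) / 2) + (x - x ^ 2) * β := by
    have hpoly (y : ℝ) :
        (1 - x - y) * α + x * β + y * γ = ((1 - x) * α + x * β) + y * (γ - α) := by ring
    simp only [hpoly]
    rw [intervalIntegral.integral_add (by simp) (Continuous.intervalIntegrable (by fun_prop) _ _)]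
    simp only [intervalIntegrable_const, intervalIntegral.integral_add,
      intervalIntegral.integral_const_mul, intervalIntegral.integral_const, sub_zero, smul_eq_mul,
      intervalIntegral.integral_mul_const, integral_id]
    ring
  rw [setIntegral_refTri (ContinuousOn.integrableOn_compact isCompact_refTri (by fun_prop))]
  simp only [hslice]
  rw [intervalIntegral.integral_add (Continuous.intervalIntegrable (by fun_prop) _ _)
    (Continuous.intervalIntegrable (by fun_prop) _ _)]
  simp only [intervalIntegral.integral_mul_const,
    intervalIntegral.integral_comp_sub_left (fun x => x ^ 2), sub_self, sub_zero, integral_pow,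
    intervalIntegral.intervalIntegrable_id, intervalIntegral.intervalIntegrable_pow,
    intervalIntegral.integral_sub, integral_id]
  norm_num
  ring

end ReferenceTriangle

section ChangeOfVariables

variable {E : Type*} [NormedAddCommGroup E] [NormedSpace ℝ E]

/-- The linear map with columns `u` and `v`: the linear part of `baryPoint`, whose determinant is
`det2 u v`. -/
noncomputable def edgeMap (u v : ℝ × ℝ) : ℝ × ℝ →L[ℝ] ℝ × ℝ :=
  (Matrix.toLin (.finTwoProd ℝ) (.finTwoProd ℝ) !![u.1, v.1; u.2, v.2]).toContinuousLinearMap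

theorem edgeMap_apply (u v q : ℝ × ℝ) : edgeMap u v q = q.1 • u + q.2 • v := by
  ext <;> simp [edgeMap, Matrix.toLin_finTwoProd_apply, mul_comm]

theorem det_edgeMap (u v : ℝ × ℝ) : (edgeMap u v).det = det2 u v := by
  simp only [edgeMap, LinearMap.det_toContinuousLinearMap, LinearMap.det_toLin,
    Matrix.det_fin_two_of, det2]
  ring

theorem baryPoint_eq_edgeMap_add (p0 p1 p2 q : ℝ × ℝ) :
    baryPoint p0 p1 p2 q = edgeMap (p1 - p0) (p2 - p0) q + p0 := by
  rw [edgeMap_apply, baryPoint]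
  module

theorem baryPoint_injective {p0 p1 p2 : ℝ × ℝ} (hd : det2 (p1 - p0) (p2 - p0) ≠ 0) :
    Function.Injective (baryPoint p0 p1 p2) := by
  rw [funext (baryPoint_eq_edgeMap_add p0 p1 p2)]
  rw [← det_edgeMap] at hd
  exact (add_left_injective p0).comp
    (ContinuousLinearMap.toContinuousLinearEquivOfDetNeZero _ hd).injective

theorem setIntegral_tri {p0 p1 p2 : ℝ × ℝ} (hd : det2 (p1 - p0) (p2 - p0) ≠ 0)
    (g : ℝ × ℝ → E) :
    ∫ x in tri p0 p1 p2, g x =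
      |det2 (p1 - p0) (p2 - p0)| • ∫ q in refTri, g (baryPoint p0 p1 p2 q) := by
  have hderiv : ∀ q ∈ refTri, HasFDerivWithinAt (baryPoint p0 p1 p2)
      (edgeMap (p1 - p0) (p2 - p0)) refTri q := fun q _ => by
    rw [funext (baryPoint_eq_edgeMap_add p0 p1 p2)]
    exact ((edgeMap _ _).hasFDerivAt.add_const p0).hasFDerivWithinAt
  rw [tri_eq_image_baryPoint, integral_image_eq_integral_abs_det_fderiv_smul volume
    isCompact_refTri.measurableSet hderiv (baryPoint_injective hd).injOn, det_edgeMap,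
    integral_smul]

end ChangeOfVariables

section InterpolationError

variable {p0 p1 p2 : ℝ × ℝ} {f : ℝ × ℝ → ℝ}

theorem continuous_interp (p0 p1 p2 : ℝ × ℝ) (f : ℝ × ℝ → ℝ) :
    Continuous (interp p0 p1 p2 f) := by
  unfold interp det2
  fun_prop

theorem interp_baryPoint (hd : det2 (p1 - p0) (p2 - p0) ≠ 0) (f : ℝ × ℝ → ℝ) (q : ℝ × ℝ) :
    interp p0 p1 p2 f (baryPoint p0 p1 p2 q) =
      (1 - q.1 - q.2) * f p0 + q.1 * f p1 + q.2 * f p2 := by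
  rw [interp, div_eq_iff hd]
  simp only [baryPoint, det2, Prod.fst_add, Prod.snd_add, Prod.fst_sub, Prod.snd_sub,
    Prod.smul_fst, Prod.smul_snd, smul_eq_mul]
  ring

theorem le_interp_of_convexOn (hd : det2 (p1 - p0) (p2 - p0) ≠ 0)
    (hf : ConvexOn ℝ (tri p0 p1 p2) f) {x : ℝ × ℝ} (hx : x ∈ tri p0 p1 p2) :
    f x ≤ interp p0 p1 p2 f x := by
  obtain ⟨q, hq, rfl⟩ := tri_eq_image_baryPoint p0 p1 p2 ▸ hx
  exact (apply_baryPoint_le_of_convexOn hf hq).trans_eq (interp_baryPoint hd f q).symm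

theorem setIntegral_interp (hd : det2 (p1 - p0) (p2 - p0) ≠ 0) (f : ℝ × ℝ → ℝ) :
    ∫ x in tri p0 p1 p2, interp p0 p1 p2 f x =
      triArea p0 p1 p2 / 3 * (f p0 + f p1 + f p2) := by
  simp only [setIntegral_tri hd, interp_baryPoint hd, setIntegral_refTri_bary, triArea,
    smul_eq_mul]
  ring

theorem interpErr_of_convexOn (hd : det2 (p1 - p0) (p2 - p0) ≠ 0)
    (hf : ConvexOn ℝ (tri p0 p1 p2) f) :
    interpErr p0 p1 p2 f =
      triArea p0 p1 p2 / 3 * (f p0 + f p1 + f p2) - ∫ x in tri p0 p1 p2, f x := by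
  have hK := isCompact_tri p0 p1 p2
  rw [← setIntegral_interp hd, ← integral_sub
    ((continuous_interp p0 p1 p2 f).continuousOn.integrableOn_compact hK)
    (integrableOn_tri_of_convexOn hf), interpErr]
  refine setIntegral_congr_fun hK.measurableSet fun x hx => ?_
  rw [abs_sub_comm, abs_of_nonneg (sub_nonneg.2 (le_interp_of_convexOn hd hf hx))]

end InterpolationError

section Cutting

variable {E : Type*} [NormedAddCommGroup E] [NormedSpace ℝ E] {z0 z1 z2 : ℝ × ℝ} {s : ℝ}

theorem segment_eq_union_of_mem_segment {V : Type*} [AddCommGroup V] [Module ℝ V] {x y m : V}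
    (hm : m ∈ segment ℝ x y) : segment ℝ x y = segment ℝ x m ∪ segment ℝ m y := by
  have hconv := convex_segment (𝕜 := ℝ) x y
  refine Set.Subset.antisymm ?_ (Set.union_subset
    (hconv.segment_subset (left_mem_segment ℝ x y) hm)
    (hconv.segment_subset hm (right_mem_segment ℝ x y)))
  have hrange : m ∈ Set.range (AffineMap.lineMap x y : ℝ → V) :=
    Set.image_subset_range _ _ (segment_eq_image_lineMap ℝ x y ▸ hm)
  rw [← insert_endpoints_openSegment]
  rintro _ (rfl | rfl | hz)
  · exact .inl (left_mem_segment ℝ _ _)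
  · exact .inr (right_mem_segment ℝ _ _)
  · rcases openSegment_subset_union x y hrange hz with rfl | hz | hz
    · exact .inl (right_mem_segment ℝ _ _)
    · exact .inl (openSegment_subset_segment ℝ _ _ hz)
    · exact .inr (openSegment_subset_segment ℝ _ _ hz)

theorem tri_eq_union_of_mem_segment {m : ℝ × ℝ} (hm : m ∈ segment ℝ z0 z1) (z2 : ℝ × ℝ) :
    tri z0 z1 z2 = tri z0 m z2 ∪ tri m z1 z2 := by
  simp only [tri, ← convexJoin_segment_singleton, ← convexJoin_union_left,
    ← segment_eq_union_of_mem_segment hm]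

theorem det2_lineMap_left (z0 z1 z2 : ℝ × ℝ) (s : ℝ) :
    det2 (AffineMap.lineMap z0 z1 s - z0) (z2 - z0) = s * det2 (z1 - z0) (z2 - z0) := by
  simp only [det2, AffineMap.lineMap_apply, vsub_eq_sub, vadd_eq_add, add_sub_cancel_right,
    Prod.smul_fst, Prod.fst_sub, smul_eq_mul, Prod.snd_sub, Prod.smul_snd]
  ring

theorem det2_lineMap_right (z0 z1 z2 : ℝ × ℝ) (s : ℝ) :
    det2 (z1 - AffineMap.lineMap z0 z1 s) (z2 - AffineMap.lineMap z0 z1 s) =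
      (1 - s) * det2 (z1 - z0) (z2 - z0) := by
  simp only [det2, AffineMap.lineMap_apply, vsub_eq_sub, vadd_eq_add, Prod.fst_sub, Prod.fst_add,
    Prod.smul_fst, smul_eq_mul, Prod.snd_sub, Prod.snd_add, Prod.smul_snd]
  ring

theorem triArea_lineMap_left (z0 z1 z2 : ℝ × ℝ) (hs : 0 ≤ s) :
    triArea z0 (AffineMap.lineMap z0 z1 s) z2 = s * triArea z0 z1 z2 := by
  rw [triArea, det2_lineMap_left, abs_mul, abs_of_nonneg hs, mul_div_assoc, triArea]

theorem triArea_lineMap_right (z0 z1 z2 : ℝ × ℝ) (hs : s ≤ 1) :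
    triArea (AffineMap.lineMap z0 z1 s) z1 z2 = (1 - s) * triArea z0 z1 z2 := by
  rw [triArea, det2_lineMap_right, abs_mul, abs_of_nonneg (sub_nonneg.2 hs), mul_div_assoc,
    triArea]

theorem aedisjoint_tri_lineMap (hd : det2 (z1 - z0) (z2 - z0) ≠ 0) (hs : s ∈ Set.Icc (0 : ℝ) 1) :
    AEDisjoint volume (tri z0 (AffineMap.lineMap z0 z1 s) z2)
      (tri (AffineMap.lineMap z0 z1 s) z1 z2) := by
  set m := AffineMap.lineMap z0 z1 s with hm
  set d := det2 (z1 - z0) (z2 - z0) with hd_def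
  -- The level line of `l` through `z2` is the cut; the factor `d` makes `l` increase from `z0`
  -- to `z1` for either orientation of the triangle.
  let l : ℝ × ℝ →ₗ[ℝ] ℝ :=
    d • ((m - z2).1 • LinearMap.snd ℝ ℝ ℝ - (m - z2).2 • LinearMap.fst ℝ ℝ ℝ)
  have hl_apply (x : ℝ × ℝ) : l x = d * ((m - z2).1 * x.2 - (m - z2).2 * x.1) := rfl
  have hl_m : l m = l z2 := by
    simp only [hl_apply, Prod.fst_sub, Prod.snd_sub]
    ring
  have hl_z0 : l z0 = l z2 - s * d ^ 2 := by
    simp only [hl_apply, hd_def, hm, det2, AffineMap.lineMap_apply, vsub_eq_sub, vadd_eq_add,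
      Prod.fst_sub, Prod.snd_sub, Prod.fst_add, Prod.snd_add, Prod.smul_fst, Prod.smul_snd,
      smul_eq_mul]
    ring
  have hl_z1 : l z1 = l z2 + (1 - s) * d ^ 2 := by
    simp only [hl_apply, hd_def, hm, det2, AffineMap.lineMap_apply, vsub_eq_sub, vadd_eq_add,
      Prod.fst_sub, Prod.snd_sub, Prod.fst_add, Prod.snd_add, Prod.smul_fst, Prod.smul_snd,
      smul_eq_mul]
    ring
  have hl : l ≠ 0 := fun h => by
    simp only [h, LinearMap.zero_apply] at hl_z0 hl_z1
    exact pow_ne_zero 2 hd (by linarith)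
  have hleft : tri z0 m z2 ⊆ {x | l x ≤ l z2} :=
    tri_subset (convex_halfSpace_le l.isLinear _)
      (hl_z0.trans_le (sub_le_self _ (mul_nonneg hs.1 (sq_nonneg d)))) hl_m.le (le_refl (l z2))
  have hright : tri m z1 z2 ⊆ {x | l z2 ≤ l x} :=
    tri_subset (convex_halfSpace_ge l.isLinear _) hl_m.ge
      ((le_add_of_nonneg_right (mul_nonneg (sub_nonneg.2 hs.2) (sq_nonneg d))).trans_eq
        hl_z1.symm) (le_refl (l z2))
  exact measure_mono_null (fun x hx => le_antisymm (hleft hx.1) (hright hx.2))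
    (addHaar_setOf_linearMap_eq volume hl (l z2))

theorem setIntegral_tri_eq_add_lineMap (hd : det2 (z1 - z0) (z2 - z0) ≠ 0)
    (hs : s ∈ Set.Icc (0 : ℝ) 1) {g : ℝ × ℝ → E} (hg : IntegrableOn g (tri z0 z1 z2)) :
    ∫ x in tri z0 z1 z2, g x = (∫ x in tri z0 (AffineMap.lineMap z0 z1 s) z2, g x) +
      ∫ x in tri (AffineMap.lineMap z0 z1 s) z1 z2, g x := by
  have hunion := tri_eq_union_of_mem_segment (lineMap_mem_segment ℝ z0 z1 hs) z2
  rw [hunion] at hg ⊢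
  exact setIntegral_union₀ (aedisjoint_tri_lineMap hd hs)
    (isCompact_tri _ _ _).measurableSet.nullMeasurableSet hg.left_of_union hg.right_of_union

theorem interpErr_sub_interpErr_lineMap {f : ℝ × ℝ → ℝ} (hd : det2 (z1 - z0) (z2 - z0) ≠ 0)
    (hf : ConvexOn ℝ (tri z0 z1 z2) f) (hs : s ∈ Set.Ioo (0 : ℝ) 1) :
    interpErr z0 z1 z2 f - interpErr z0 (AffineMap.lineMap z0 z1 s) z2 f -
        interpErr (AffineMap.lineMap z0 z1 s) z1 z2 f =
      triArea z0 z1 z2 / 3 *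
        ((1 - s) * f z0 + s * f z1 - f (AffineMap.lineMap z0 z1 s)) := by
  have hs' := Set.Ioo_subset_Icc_self hs
  have hunion := tri_eq_union_of_mem_segment (lineMap_mem_segment ℝ z0 z1 hs') z2
  have hleft := hf.subset (hunion ▸ Set.subset_union_left) (convex_convexHull ℝ _)
  have hright := hf.subset (hunion ▸ Set.subset_union_right) (convex_convexHull ℝ _)
  rw [interpErr_of_convexOn hd hf,
    interpErr_of_convexOn (det2_lineMap_left z0 z1 z2 s ▸ mul_ne_zero hs.1.ne' hd) hleft,
    interpErr_of_convexOn
      (det2_lineMap_right z0 z1 z2 s ▸ mul_ne_zero (sub_pos.2 hs.2).ne' hd) hright,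
    triArea_lineMap_left z0 z1 z2 hs'.1, triArea_lineMap_right z0 z1 z2 hs'.2,
    setIntegral_tri_eq_add_lineMap hd hs' (integrableOn_tri_of_convexOn hf)]
  ring

theorem ddec_of_convexOn {f : ℝ × ℝ → ℝ} (hd : det2 (z1 - z0) (z2 - z0) ≠ 0)
    (hf : ConvexOn ℝ (tri z0 z1 z2) f) :
    Ddec z0 z1 z2 f = triArea z0 z1 z2 / 6 * (f z0 + f z1 - 2 * f (midpoint ℝ z0 z1)) := by
  rw [Ddec, ← lineMap_one_half,
    interpErr_sub_interpErr_lineMap hd hf (by norm_num : (1 / 2 : ℝ) ∈ Set.Ioo (0 : ℝ) 1)]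
  ring

end Cutting

theorem det2_ne_zero_of_linearIndependent {u v : ℝ × ℝ} (h : LinearIndependent ℝ ![u, v]) :
    det2 u v ≠ 0 := fun hd => by
  rw [LinearIndependent.pair_iff] at h
  simp only [det2] at hd
  obtain ⟨-, hu₂⟩ := h v.2 (-u.2) (by ext <;> simp <;> linarith)
  obtain ⟨-, hu₁⟩ := h v.1 (-u.1) (by ext <;> simp <;> linarith)
  have hu : u = 0 := Prod.ext (neg_eq_zero.1 hu₁) (neg_eq_zero.1 hu₂)
  exact one_ne_zero (h 1 0 (by simp [hu])).1

theorem det2_ne_zero_of_affineIndependent {p0 p1 p2 : ℝ × ℝ}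
    (h : AffineIndependent ℝ ![p0, p1, p2]) : det2 (p1 - p0) (p2 - p0) ≠ 0 := by
  refine det2_ne_zero_of_linearIndependent (LinearIndependent.pair_iff.2 fun a b hab => ?_)
  have := affineIndependent_iff.1 h Finset.univ ![-a - b, a, b]
    (by simp [Fin.sum_univ_three]; ring)
    (by rw [← hab]; simp only [Fin.sum_univ_three, Matrix.cons_val]; module)
  exact ⟨by simpa using this 1 (by simp), by simpa using this 2 (by simp)⟩

theorem stmt5_general (z0 z1 z2 : ℝ × ℝ) (hT : AffineIndependent ℝ ![z0, z1, z2])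
    (f : ℝ × ℝ → ℝ) (hf : ∀ z ∈ segment ℝ z0 z1, ContDiffAt ℝ 2 f z)
    (hconv : ConvexOn ℝ (tri z0 z1 z2) f) :
    Ddec z0 z1 z2 f = triArea z0 z1 z2 / 6 *
      ∫ t in (0 : ℝ)..1,
        (fderiv ℝ (fderiv ℝ f) ((1 - t) • z0 + t • z1)) (z1 - z0) (z1 - z0) *
          min t (1 - t) := by
  have hkernel := integral_min_smul_fderiv_fderiv hf
  simp only [smul_eq_mul, mul_comm (min _ _)] at hkernel
  rw [ddec_of_convexOn (det2_ne_zero_of_affineIndependent hT) hconv, hkernel]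

/-- for a convex `C²` function `f` on a nondegenerate triangle `T`
with vertices `z0, z1, z2` and edge `e = [z0,z1]`,
`D_T(e,f) = (|T|/6)·∫₀¹ ⟨d²f(z_t)(z1−z0), z1−z0⟩·min{t,1−t} dt`,
where `z_t = (1−t)z0 + t z1`. -/
theorem stmt5 (z0 z1 z2 : ℝ × ℝ) (hT : AffineIndependent ℝ ![z0, z1, z2])
    (f : ℝ × ℝ → ℝ) (hf : ContDiff ℝ 2 f) (hconv : ConvexOn ℝ (tri z0 z1 z2) f) :
    Ddec z0 z1 z2 f = triArea z0 z1 z2 / 6 *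
      ∫ t in (0 : ℝ)..1,
        (fderiv ℝ (fderiv ℝ f) ((1 - t) • z0 + t • z1)) (z1 - z0) (z1 - z0) *
          min t (1 - t) := by
  exact stmt5_general z0 z1 z2 hT f (fun _ _ => hf.contDiffAt) hconv
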